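/- arXiv:1805.10838 — 2 statements merged into one kernel-verified Lean document; each statement's English description precedes it below -/
import Mathlib

section
/- Suppose x : [0,T] → ℝⁿ is of the form x(t) = (I^α φ₀)(t) for some φ₀ ∈ L^∞, and let φ ∈ L^∞ satisfy (D^α x)(t) = φ(t) for almost every t ∈ [0,T]. Then for every step size h > 0 and every t ∈ [0,T], the divided Grünwald–Letnikov fractional difference satisfies h^{−α} (Δ_h^α x)(t) = ∫₀^{t/h} φ(t − τh) p_α(τ) dτ, where p_α(τ) = (1/Γ(α)) Σ_{0 ≤ j < τ} (−1)^j C(α,j) (τ − j)^{α−1}. -/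
open MeasureTheory Set Real RealInnerProductSpace

noncomputable section

abbrev Evec (n : ℕ) := EuclideanSpace ℝ (Fin n)

/-- Generalized binomial coefficient `binom a j`. -/
def binomR (a : ℝ) (j : ℕ) : ℝ :=
  (∏ i ∈ Finset.range j, (a - (i : ℝ))) / (Nat.factorial j : ℝ)

/-- Left-sided Riemann–Liouville fractional integral of order `α` with base point `0`. -/
def RLint {E : Type*} [NormedAddCommGroup E] [NormedSpace ℝ E]
    (α : ℝ) (f : ℝ → E) (t : ℝ) : E :=
  (Real.Gamma α)⁻¹ • ∫ τ in (0:ℝ)..t, ((t - τ) ^ (α - 1) : ℝ) • f τ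

/-- Left-sided Riemann–Liouville fractional derivative of order `α` with base point `0`. -/
def RLderiv {E : Type*} [NormedAddCommGroup E] [NormedSpace ℝ E]
    (α : ℝ) (x : ℝ → E) (t : ℝ) : E :=
  deriv (fun s => (Real.Gamma (1 - α))⁻¹ • ∫ τ in (0:ℝ)..s, ((s - τ) ^ (-α) : ℝ) • x τ) t

/-- Caputo fractional derivative of order `α` with base point `0`. -/
def CapDeriv {E : Type*} [NormedAddCommGroup E] [NormedSpace ℝ E]
    (α : ℝ) (x : ℝ → E) (t : ℝ) : E :=
  RLderiv α (fun s => x s - x 0) t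

/-- Grünwald–Letnikov fractional difference of order `α` with step `h`. -/
def GLdiff {E : Type*} [NormedAddCommGroup E] [NormedSpace ℝ E]
    (α h : ℝ) (x : ℝ → E) (t : ℝ) : E :=
  ∑ j ∈ Finset.range (⌊t / h⌋₊ + 1), ((-1 : ℝ) ^ j * binomR α j) • x (t - (j : ℝ) * h)

/-- The kernel `p_α`. -/
def pker (α : ℝ) (τ : ℝ) : ℝ :=
  (Real.Gamma α)⁻¹ * ∑ j ∈ Finset.range ⌈τ⌉₊, (-1 : ℝ) ^ j * binomR α j * ((τ - (j : ℝ)) ^ (α - 1) : ℝ)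

/-- Mittag-Leffler function `E_α`. -/
def mittagLeffler (α z : ℝ) : ℝ := ∑' k : ℕ, z ^ k / Real.Gamma (α * (k : ℝ) + 1)

/-- `x` is a solution of the Caputo Cauchy problem `(^C D^α x)(t) = f(t, x(t))`, `x 0 = x₀`. -/
def IsCaputoSol (α T : ℝ) {n : ℕ} (f : ℝ → Evec n → Evec n) (x₀ : Evec n)
    (x : ℝ → Evec n) : Prop :=
  (∃ φ : ℝ → Evec n, Measurable φ ∧
    (∃ C : ℝ, ∀ᵐ t ∂volume.restrict (Icc (0:ℝ) T), ‖φ t‖ ≤ C) ∧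
    ∀ t ∈ Icc (0:ℝ) T, x t = x₀ + RLint α φ t) ∧
  ∀ᵐ t ∂volume.restrict (Icc (0:ℝ) T), CapDeriv α x t = f t (x t)

/-- `y` is a solution of the approximating retarded functional-differential Cauchy problem. -/
def IsApproxSol (α T h : ℝ) {n : ℕ} (f : ℝ → Evec n → Evec n) (x₀ : Evec n)
    (y : ℝ → Evec n) : Prop :=
  (∃ Ly : NNReal, LipschitzOnWith Ly y (Icc (0:ℝ) T)) ∧ y 0 = 0 ∧
  ∀ᵐ t ∂volume.restrict (Icc (0:ℝ) T),
    HasDerivAt y (f t (x₀ + ((h ^ (α - 1) : ℝ)) • GLdiff (1 - α) h y t)) t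

/-- `x` is a motion of the conflict-controlled Caputo system for realizations `u`, `v`. -/
def IsCtrlSol (α T : ℝ) {n nu nv : ℕ}
    (g : ℝ → Evec n → Evec nu → Evec nv → Evec n) (x₀ : Evec n)
    (u : ℝ → Evec nu) (v : ℝ → Evec nv) (x : ℝ → Evec n) : Prop :=
  (∃ φ : ℝ → Evec n, Measurable φ ∧
    (∃ C : ℝ, ∀ᵐ t ∂volume.restrict (Icc (0:ℝ) T), ‖φ t‖ ≤ C) ∧
    ∀ t ∈ Icc (0:ℝ) T, x t = x₀ + RLint α φ t) ∧
  ∀ᵐ t ∂volume.restrict (Icc (0:ℝ) T), CapDeriv α x t = g t (x t) (u t) (v t)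

/-- `y` is a motion of the approximating conflict-controlled system for realizations `ũ`, `ṽ`. -/
def IsCtrlApproxSol (α T h : ℝ) {n nu nv : ℕ}
    (g : ℝ → Evec n → Evec nu → Evec nv → Evec n) (x₀ : Evec n)
    (ut : ℝ → Evec nu) (vt : ℝ → Evec nv) (y : ℝ → Evec n) : Prop :=
  (∃ Ly : NNReal, LipschitzOnWith Ly y (Icc (0:ℝ) T)) ∧ y 0 = 0 ∧
  ∀ᵐ t ∂volume.restrict (Icc (0:ℝ) T),
    HasDerivAt y (g t (x₀ + ((h ^ (α - 1) : ℝ)) • GLdiff (1 - α) h y t) (ut t) (vt t)) t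

/-!
With the normalized kernel `k_a(u) = u₊ ^ (a - 1) / Γ(a)`, the fractional integral of order `a` is
convolution with `k_a` on the half-line. The product `k_a(s - τ) k_b(τ - r)` is, in `τ`, the
multiple `k_{a+b}(s - r)` of a beta density rescaled to `(r, s)`, so Fubini gives the semigroup law
`I^a I^b = I^{a+b}`. In particular `I^{1-α} I^α φ₀` is the primitive of `φ₀`, and Lebesgue
differentiation yields `D^α x = φ₀` almost everywhere; hence `φ = φ₀` a.e. and `x = I^α φ`.

On the other side `p_α(τ) = ∑ j, (-1)^j C(α, j) k_α(τ - j)`. Substituting `σ = t - τ h` and using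
the homogeneity `k_α(u / h) = h ^ (1 - α) k_α(u)`, the integral against `p_α` becomes the sum of
the terms `(-1)^j C(α, j) h ^ (-α) (I^α φ)(t - j h)`, which is the divided difference.
-/

open ProbabilityTheory Topology Interval

section Kernel

/-- The Riemann–Liouville kernel `u₊ ^ (a - 1) / Γ(a)`, cut off to `0` on `u ≤ 0`: convolution with
it on the half-line is the fractional integral of order `a`. -/
def rlKernel (a u : ℝ) : ℝ := if 0 < u then (Gamma a)⁻¹ * u ^ (a - 1) else 0

variable {a b u : ℝ}

lemma rlKernel_of_pos (hu : 0 < u) : rlKernel a u = (Gamma a)⁻¹ * u ^ (a - 1) := if_pos hu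

lemma rlKernel_of_nonpos (hu : u ≤ 0) : rlKernel a u = 0 := if_neg hu.not_gt

lemma rlKernel_nonneg (ha : 0 ≤ a) : 0 ≤ rlKernel a u := by
  rcases le_or_gt u 0 with hu | hu
  · exact (rlKernel_of_nonpos hu).ge
  · rw [rlKernel_of_pos hu]
    exact mul_nonneg (inv_nonneg.2 (Gamma_nonneg_of_nonneg ha)) (rpow_nonneg hu.le _)

lemma rlKernel_div {h : ℝ} (hh : 0 < h) (a u : ℝ) :
    rlKernel a (u / h) = h ^ (1 - a) * rlKernel a u := by
  rcases le_or_gt u 0 with hu | hu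
  · rw [rlKernel_of_nonpos (div_nonpos_of_nonpos_of_nonneg hu hh.le), rlKernel_of_nonpos hu,
      mul_zero]
  · rw [rlKernel_of_pos (div_pos hu hh), rlKernel_of_pos hu, div_rpow hu.le hh.le,
      ← neg_sub a 1, rpow_neg hh.le]
    ring

lemma betaPDFReal_nonneg (ha : 0 < a) (hb : 0 < b) (u : ℝ) : 0 ≤ betaPDFReal a b u := by
  by_cases hu : 0 < u ∧ u < 1
  · exact (betaPDFReal_pos hu.1 hu.2 ha hb).le
  · exact (if_neg hu).ge

lemma integral_betaPDFReal_eq_one (ha : 0 < a) (hb : 0 < b) : ∫ u, betaPDFReal a b u = 1 := by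
  rw [integral_eq_lintegral_of_nonneg_ae (.of_forall (betaPDFReal_nonneg ha hb))
    (measurable_betaPDFReal a b).aestronglyMeasurable]
  exact (ENNReal.toReal_eq_one_iff _).2 (lintegral_betaPDF_eq_one ha hb)

lemma integrable_betaPDFReal (ha : 0 < a) (hb : 0 < b) : Integrable (betaPDFReal a b) :=
  .of_integral_ne_zero (by rw [integral_betaPDFReal_eq_one ha hb]; exact one_ne_zero)

lemma rlKernel_mul_rlKernel_of_lt_of_lt (ha : 0 < a) (hb : 0 < b) {r s τ : ℝ} (hrτ : r < τ)
    (hτs : τ < s) :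
    rlKernel a (s - τ) * rlKernel b (τ - r) =
      rlKernel (a + b) (s - r) * ((s - r)⁻¹ * betaPDFReal b a ((τ - r) / (s - r))) := by
  have hp : 0 < τ - r := sub_pos.2 hrτ
  have hq : 0 < s - τ := sub_pos.2 hτs
  have hpq : 0 < s - r := sub_pos.2 (hrτ.trans hτs)
  have hquot : 0 < (τ - r) / (s - r) ∧ (τ - r) / (s - r) < 1 :=
    ⟨div_pos hp hpq, (div_lt_one hpq).2 (by linarith)⟩
  have hcompl : 1 - (τ - r) / (s - r) = (s - τ) / (s - r) := by field_simp; ring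
  have hpow : (s - r) ^ (a + b - 1) = (s - r) ^ (b - 1) * (s - r) ^ (a - 1) * (s - r) := by
    rw [← rpow_add hpq, ← rpow_add_one hpq.ne']
    ring_nf
  have hpow_a : (s - r) ^ (a - 1) ≠ 0 := (rpow_pos_of_pos hpq _).ne'
  have hpow_b : (s - r) ^ (b - 1) ≠ 0 := (rpow_pos_of_pos hpq _).ne'
  have hΓa : Gamma a ≠ 0 := (Gamma_pos_of_pos ha).ne'
  have hΓb : Gamma b ≠ 0 := (Gamma_pos_of_pos hb).ne'
  have hΓab : Gamma (a + b) ≠ 0 := (Gamma_pos_of_pos (add_pos ha hb)).ne'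
  rw [rlKernel_of_pos hp, rlKernel_of_pos hq, rlKernel_of_pos hpq, betaPDFReal, if_pos hquot,
    hcompl, hpow, div_rpow hp.le hpq.le, div_rpow hq.le hpq.le, beta, add_comm b a]
  field_simp

lemma rlKernel_mul_rlKernel (ha : 0 < a) (hb : 0 < b) (r s τ : ℝ) :
    rlKernel a (s - τ) * rlKernel b (τ - r) =
      rlKernel (a + b) (s - r) * ((s - r)⁻¹ * betaPDFReal b a ((τ - r) / (s - r))) := by
  rcases le_or_gt s r with hsr | hrs
  · rcases le_total s τ with hsτ | hτs
    · simp [rlKernel_of_nonpos, hsr, hsτ]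
    · simp [rlKernel_of_nonpos, hsr, hτs.trans hsr]
  rcases le_or_gt τ r with hτr | hrτ
  · have hquot : ¬0 < (τ - r) / (s - r) :=
      (div_nonpos_of_nonpos_of_nonneg (sub_nonpos.2 hτr) (sub_pos.2 hrs).le).not_gt
    simp [rlKernel_of_nonpos, betaPDFReal, hτr, hquot]
  rcases le_or_gt s τ with hsτ | hτs
  · have hquot : ¬(τ - r) / (s - r) < 1 :=
      ((one_le_div (sub_pos.2 hrs)).2 (sub_le_sub_right hsτ r)).not_gt
    simp [rlKernel_of_nonpos, betaPDFReal, hsτ, hquot]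
  exact rlKernel_mul_rlKernel_of_lt_of_lt ha hb hrτ hτs

lemma integrable_rlKernel_mul_rlKernel (ha : 0 < a) (hb : 0 < b) (r s : ℝ) :
    Integrable fun τ ↦ rlKernel a (s - τ) * rlKernel b (τ - r) := by
  simp_rw [rlKernel_mul_rlKernel ha hb]
  rcases eq_or_ne (s - r) 0 with hsr | hsr
  · simp [hsr]
  · exact ((((integrable_betaPDFReal hb ha).comp_div hsr).comp_sub_right r).const_mul _).const_mul _

lemma integral_rlKernel_mul_rlKernel (ha : 0 < a) (hb : 0 < b) (r s : ℝ) :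
    ∫ τ, rlKernel a (s - τ) * rlKernel b (τ - r) = rlKernel (a + b) (s - r) := by
  simp_rw [rlKernel_mul_rlKernel ha hb, integral_const_mul]
  rcases le_or_gt s r with hsr | hrs
  · rw [rlKernel_of_nonpos (sub_nonpos.2 hsr), zero_mul]
  · have hpos : 0 < s - r := sub_pos.2 hrs
    rw [integral_sub_right_eq_self (fun τ ↦ betaPDFReal b a (τ / (s - r))),
      Measure.integral_comp_div, integral_betaPDFReal_eq_one hb ha, abs_of_pos hpos,
      smul_eq_mul, mul_one, inv_mul_cancel₀ hpos.ne', mul_one]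

end Kernel

section FractionalIntegral

variable {E : Type*} [NormedAddCommGroup E] [NormedSpace ℝ E] {a b α s T : ℝ} {f g x : ℝ → E}

/-- Absolute convergence at `s` of the integral defining `RLint a f s`; without it the Bochner
integral, and hence `RLint a f s`, takes the junk value `0`. -/
def RLIntegrableAt (a : ℝ) (f : ℝ → E) (s : ℝ) : Prop :=
  IntervalIntegrable (fun τ ↦ (s - τ) ^ (a - 1) • f τ) volume 0 s

lemma rlIntegrableAt_one_iff : RLIntegrableAt 1 f s ↔ IntervalIntegrable f volume 0 s := by
  simp [RLIntegrableAt]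

lemma rlIntegrableAt_of_ae_norm_le (ha : 0 < a) (hs : s ∈ Icc 0 T) {C : ℝ}
    (hfm : AEStronglyMeasurable f (volume.restrict (Icc 0 T)))
    (hfC : ∀ᵐ τ ∂volume.restrict (Icc 0 T), ‖f τ‖ ≤ C) : RLIntegrableAt a f s := by
  have hpow : IntervalIntegrable (fun τ ↦ (s - τ) ^ (a - 1)) volume 0 s := by
    have := (intervalIntegral.intervalIntegrable_rpow' (a := 0) (b := s)
      (r := a - 1) (by linarith)).comp_sub_left s
    simpa using this.symm
  have hle : volume.restrict (Ioc 0 s) ≤ volume.restrict (Icc 0 T) :=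
    Measure.restrict_mono_set _ ((Ioc_subset_Ioc_right hs.2).trans Ioc_subset_Icc_self)
  rw [intervalIntegrable_iff_integrableOn_Ioc_of_le hs.1] at hpow
  rw [RLIntegrableAt, intervalIntegrable_iff_integrableOn_Ioc_of_le hs.1]
  exact Integrable.smul_bdd hpow C (hfm.mono_measure hle) (ae_mono hle hfC)

lemma RLIntegrableAt.congr_ae (hf : RLIntegrableAt a f s)
    (hfg : f =ᵐ[volume.restrict (Ι 0 s)] g) : RLIntegrableAt a g s :=
  IntervalIntegrable.congr_ae hf (hfg.mono fun _ hτ ↦ congrArg _ hτ)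

lemma RLint_congr_ae (hfg : f =ᵐ[volume.restrict (Ι 0 s)] g) : RLint a f s = RLint a g s := by
  rw [RLint, RLint]
  congr 1
  exact intervalIntegral.integral_congr_ae_restrict (hfg.mono fun _ hτ ↦ congrArg _ hτ)

lemma RLIntegrableAt.intervalIntegrable (hs : 0 ≤ s) (ha : a ≤ 1) (hf : RLIntegrableAt a f s) :
    IntervalIntegrable f volume 0 s := by
  have hcont : Continuous fun τ ↦ (s - τ) ^ (1 - a) :=
    (continuous_const.sub continuous_id).rpow_const fun _ ↦ .inr (sub_nonneg.2 ha)
  refine (hf.continuousOn_smul hcont.continuousOn).congr_uIoo fun τ hτ ↦ ?_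
  rw [uIoo_of_le hs] at hτ
  simp only [smul_smul]
  rw [← rpow_add (sub_pos.2 hτ.2), sub_add_sub_cancel, sub_self, rpow_zero, one_smul]

lemma RLint_eq_setIntegral_rlKernel (hs : 0 ≤ s) :
    RLint a f s = ∫ r in Ioi 0, rlKernel a (s - r) • f r := by
  calc RLint a f s = ∫ r in Ioo 0 s, rlKernel a (s - r) • f r := by
        rw [RLint, intervalIntegral.integral_of_le hs, integral_Ioc_eq_integral_Ioo,
          ← integral_smul]
        refine setIntegral_congr_fun measurableSet_Ioo fun r hr ↦ ?_
        simp only [smul_smul]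
        rw [rlKernel_of_pos (sub_pos.2 hr.2)]
    _ = ∫ r in Ioi 0, rlKernel a (s - r) • f r := by
        refine (setIntegral_eq_of_subset_of_forall_sdiff_eq_zero measurableSet_Ioi
          Ioo_subset_Ioi_self fun r hr ↦ ?_).symm
        rw [rlKernel_of_nonpos (sub_nonpos.2 (not_lt.1 fun hrs ↦ hr.2 ⟨hr.1, hrs⟩)), zero_smul]

lemma RLIntegrableAt.integrableOn_rlKernel (hs : 0 ≤ s) (hf : RLIntegrableAt a f s) :
    IntegrableOn (fun r ↦ rlKernel a (s - r) • f r) (Ioi 0) := by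
  have hIoo : IntegrableOn (fun r ↦ rlKernel a (s - r) • f r) (Ioo 0 s) := by
    rw [RLIntegrableAt, intervalIntegrable_iff_integrableOn_Ioo_of_le hs] at hf
    refine (Integrable.smul (Gamma a)⁻¹ hf).congr ?_
    filter_upwards [ae_restrict_mem measurableSet_Ioo] with r hr
    rw [rlKernel_of_pos (sub_pos.2 hr.2), mul_smul]
    rfl
  refine hIoo.of_forall_sdiff_eq_zero measurableSet_Ioi fun r hr ↦ ?_
  rw [rlKernel_of_nonpos (sub_nonpos.2 (not_lt.1 fun hrs ↦ hr.2 ⟨hr.1, hrs⟩)), zero_smul]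

lemma integrable_rlKernel_mul_rlKernel_smul (ha : 0 < a) (hb : 0 < b) (hs : 0 ≤ s)
    (hf : RLIntegrableAt (a + b) f s) :
    Integrable (Function.uncurry fun τ r ↦ (rlKernel a (s - τ) * rlKernel b (τ - r)) • f r)
      (volume.prod (volume.restrict (Ioi 0))) := by
  have hint : IntegrableOn (fun r ↦ rlKernel (a + b) (s - r) • f r) (Ioi 0) :=
    hf.integrableOn_rlKernel hs
  have hmeas : AEStronglyMeasurable
      (Function.uncurry fun τ r ↦ (rlKernel a (s - τ) * rlKernel b (τ - r)) • f r)
      (volume.prod (volume.restrict (Ioi 0))) := by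
    -- Only `rlKernel (a + b) (s - r) • f r` is known to be measurable: `f` is arbitrary beyond `s`.
    have hcoeff : Measurable fun p : ℝ × ℝ ↦
        (s - p.2)⁻¹ * betaPDFReal b a ((p.1 - p.2) / (s - p.2)) := by fun_prop
    refine (hcoeff.aestronglyMeasurable.smul hint.aestronglyMeasurable.comp_snd).congr
      (.of_forall fun p ↦ ?_)
    simp only [Function.uncurry, rlKernel_mul_rlKernel ha hb, Pi.smul_apply', smul_smul]
    rw [mul_comm]
  refine (integrable_prod_iff' hmeas).2 ⟨.of_forall fun r ↦ ?_, hint.norm.congr ?_⟩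
  · exact (integrable_rlKernel_mul_rlKernel ha hb r s).smul_const (f r)
  · refine .of_forall fun r ↦ ?_
    have hnonneg (τ : ℝ) : 0 ≤ rlKernel a (s - τ) * rlKernel b (τ - r) :=
      mul_nonneg (rlKernel_nonneg ha.le) (rlKernel_nonneg hb.le)
    simp only [Function.uncurry, norm_smul, integral_mul_const, norm_of_nonneg (hnonneg _),
      integral_rlKernel_mul_rlKernel ha hb, norm_of_nonneg (rlKernel_nonneg (add_pos ha hb).le)]

theorem RLint_RLint [CompleteSpace E] (ha : 0 < a) (hb : 0 < b) (hs : 0 ≤ s)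
    (hf : RLIntegrableAt (a + b) f s) :
    RLint a (RLint b f) s = RLint (a + b) f s := by
  calc RLint a (RLint b f) s
      = ∫ τ in Ioi 0, ∫ r in Ioi 0, (rlKernel a (s - τ) * rlKernel b (τ - r)) • f r := by
        rw [RLint_eq_setIntegral_rlKernel hs]
        refine setIntegral_congr_fun measurableSet_Ioi fun τ hτ ↦ ?_
        simp only [RLint_eq_setIntegral_rlKernel (le_of_lt hτ), mul_smul, integral_smul]
    _ = ∫ τ, ∫ r in Ioi 0, (rlKernel a (s - τ) * rlKernel b (τ - r)) • f r := by
        refine setIntegral_eq_integral_of_forall_compl_eq_zero fun τ hτ ↦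
          setIntegral_eq_zero_of_forall_eq_zero fun r hr ↦ ?_
        rw [rlKernel_of_nonpos (sub_nonpos.2 ((not_lt.1 hτ).trans (le_of_lt hr))), mul_zero,
          zero_smul]
    _ = ∫ r in Ioi 0, ∫ τ, (rlKernel a (s - τ) * rlKernel b (τ - r)) • f r :=
        integral_integral_swap (integrable_rlKernel_mul_rlKernel_smul ha hb hs hf)
    _ = RLint (a + b) f s := by
        simp_rw [integral_smul_const, integral_rlKernel_mul_rlKernel ha hb,
          RLint_eq_setIntegral_rlKernel hs]

lemma RLint_one (f : ℝ → E) (s : ℝ) : RLint 1 f s = ∫ r in 0..s, f r := by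
  simp [RLint]

lemma RLderiv_eq_deriv_RLint (α : ℝ) (x : ℝ → E) (t : ℝ) :
    RLderiv α x t = deriv (RLint (1 - α) x) t := by
  unfold RLderiv RLint
  simp_rw [sub_sub_cancel_left]

lemma RLint_one_sub_of_eqOn_RLint [CompleteSpace E] (hα : α ∈ Ioo 0 1) (hs : 0 ≤ s)
    (hf : IntervalIntegrable f volume 0 s) (hx : EqOn x (RLint α f) (Icc 0 s)) :
    RLint (1 - α) x s = ∫ r in 0..s, f r := by
  have hx_ae : x =ᵐ[volume.restrict (Ι 0 s)] RLint α f := by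
    rw [uIoc_of_le hs]
    exact (ae_restrict_mem measurableSet_Ioc).mono fun τ hτ ↦ hx (Ioc_subset_Icc_self hτ)
  have hf' : RLIntegrableAt (1 - α + α) f s := by
    rwa [sub_add_cancel, rlIntegrableAt_one_iff]
  rw [RLint_congr_ae hx_ae, RLint_RLint (sub_pos.2 hα.2) hα.1 hs hf', sub_add_cancel, RLint_one]

theorem RLderiv_ae_eq_of_eqOn_RLint [CompleteSpace E] (hα : α ∈ Ioo 0 1)
    (hf : IntervalIntegrable f volume 0 T) (hx : EqOn x (RLint α f) (Icc 0 T)) :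
    RLderiv α x =ᵐ[volume.restrict (Icc 0 T)] f := by
  have hprim : ∀ s ∈ Icc 0 T, RLint (1 - α) x s = ∫ r in 0..s, f r := fun s hs ↦
    RLint_one_sub_of_eqOn_RLint hα hs.1
      (hf.mono_set (uIcc_subset_uIcc_left (Icc_subset_uIcc hs)))
      (hx.mono (Icc_subset_Icc_right hs.2))
  rw [← restrict_Ioo_eq_restrict_Icc]
  filter_upwards [ae_restrict_mem measurableSet_Ioo,
    ae_restrict_of_ae hf.ae_hasDerivAt_integral] with t ht hderiv
  have hprim_nhds : RLint (1 - α) x =ᶠ[𝓝 t] fun s ↦ ∫ r in 0..s, f r := by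
    filter_upwards [Icc_mem_nhds ht.1 ht.2] with s hs using hprim s hs
  rw [RLderiv_eq_deriv_RLint, hprim_nhds.deriv_eq]
  exact (hderiv (Icc_subset_uIcc (Ioo_subset_Icc_self ht)) 0 left_mem_uIcc).deriv

end FractionalIntegral

section GrunwaldLetnikov

variable {E : Type*} [NormedAddCommGroup E] [NormedSpace ℝ E] {α h t : ℝ} {f x y : ℝ → E}

lemma sub_natCast_mul_mem_Icc (hh : 0 < h) (ht : 0 ≤ t) {j : ℕ}
    (hj : j ∈ Finset.range (⌊t / h⌋₊ + 1)) : t - j * h ∈ Icc 0 t := by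
  have hjt : j * h ≤ t := (le_div_iff₀ hh).1 <|
    (Nat.le_floor_iff (div_nonneg ht hh.le)).1 (Finset.mem_range_succ_iff.1 hj)
  exact ⟨sub_nonneg.2 hjt, sub_le_self t (by positivity)⟩

lemma GLdiff_congr (hh : 0 < h) (ht : 0 ≤ t) (hxy : EqOn x y (Icc 0 t)) :
    GLdiff α h x t = GLdiff α h y t :=
  Finset.sum_congr rfl fun j hj ↦ by rw [hxy (sub_natCast_mul_mem_Icc hh ht hj)]

lemma pker_of_nonpos {τ : ℝ} (hτ : τ ≤ 0) : pker α τ = 0 := by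
  simp [pker, Nat.ceil_eq_zero.2 hτ]

lemma pker_eq_sum_rlKernel (α : ℝ) {τ : ℝ} {N : ℕ} (hτN : τ ≤ N) :
    pker α τ = ∑ j ∈ Finset.range N, (-1 : ℝ) ^ j * binomR α j * rlKernel α (τ - j) := by
  rw [pker, Finset.mul_sum,
    ← Finset.sum_subset (Finset.range_subset_range.2 (Nat.ceil_le.2 hτN))]
  · refine Finset.sum_congr rfl fun j hj ↦ ?_
    rw [rlKernel_of_pos (sub_pos.2 (Nat.lt_ceil.1 (Finset.mem_range.1 hj)))]
    ring
  · intro j _ hj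
    have hτj : τ ≤ j := Nat.ceil_le.1 (not_lt.1 (Finset.mem_range.not.1 hj))
    rw [rlKernel_of_nonpos (sub_nonpos.2 hτj), mul_zero]

lemma integral_pker_smul_comp_sub_mul (hh : 0 < h) (ht : 0 ≤ t) :
    ∫ τ in 0..(t / h), pker α τ • f (t - τ * h) =
      h⁻¹ • ∫ σ in Ioi 0, pker α ((t - σ) / h) • f σ := by
  calc ∫ τ in 0..(t / h), pker α τ • f (t - τ * h)
      = ∫ τ in 0..(t / h), pker α ((t - (t - h * τ)) / h) • f (t - h * τ) := by
        simp_rw [sub_sub_cancel, mul_div_cancel_left₀ _ hh.ne', mul_comm h]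
    _ = h⁻¹ • ∫ σ in Ioc 0 t, pker α ((t - σ) / h) • f σ := by
        rw [intervalIntegral.integral_comp_sub_mul (fun σ ↦ pker α ((t - σ) / h) • f σ) hh.ne' t,
          mul_div_cancel₀ _ hh.ne', sub_self, mul_zero, sub_zero,
          intervalIntegral.integral_of_le ht]
    _ = h⁻¹ • ∫ σ in Ioi 0, pker α ((t - σ) / h) • f σ := by
        congr 1
        refine (setIntegral_eq_of_subset_of_forall_sdiff_eq_zero measurableSet_Ioi
          Ioc_subset_Ioi_self fun σ hσ ↦ ?_).symm
        have htσ : t ≤ σ := le_of_not_ge fun hσt ↦ hσ.2 ⟨hσ.1, hσt⟩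
        rw [pker_of_nonpos (div_nonpos_of_nonpos_of_nonneg (sub_nonpos.2 htσ) hh.le), zero_smul]

lemma pker_sub_div_eq_sum_rlKernel (hh : 0 < h) {σ : ℝ} (hσ : 0 ≤ σ) :
    pker α ((t - σ) / h) = ∑ j ∈ Finset.range (⌊t / h⌋₊ + 1),
      h ^ (1 - α) * ((-1 : ℝ) ^ j * binomR α j) * rlKernel α (t - j * h - σ) := by
  have hle : (t - σ) / h ≤ (⌊t / h⌋₊ + 1 : ℕ) := by
    calc (t - σ) / h ≤ t / h := by gcongr; exact sub_le_self t hσ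
      _ ≤ (⌊t / h⌋₊ + 1 : ℕ) := by exact_mod_cast (Nat.lt_floor_add_one (t / h)).le
  rw [pker_eq_sum_rlKernel α hle]
  refine Finset.sum_congr rfl fun j _ ↦ ?_
  have hshift : (t - σ) / h - j = (t - j * h - σ) / h := by field_simp; ring
  rw [hshift, rlKernel_div hh]
  ring

theorem rpow_neg_smul_GLdiff_RLint (hh : 0 < h) (ht : 0 ≤ t)
    (hf : ∀ s ∈ Icc 0 t, RLIntegrableAt α f s) :
    h ^ (-α) • GLdiff α h (RLint α f) t =
      ∫ τ in 0..(t / h), pker α τ • f (t - τ * h) := by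
  let c (j : ℕ) : ℝ := (-1) ^ j * binomR α j
  have hint : ∀ j ∈ Finset.range (⌊t / h⌋₊ + 1), IntegrableOn
      (fun σ ↦ (h ^ (1 - α) * c j) • rlKernel α (t - j * h - σ) • f σ) (Ioi 0) := fun j hj ↦
    have hj' := sub_natCast_mul_mem_Icc hh ht hj
    ((hf _ hj').integrableOn_rlKernel hj'.1).fun_smul _
  have hpow : h ^ (-α) = h⁻¹ * h ^ (1 - α) := by
    rw [← rpow_neg_one, ← rpow_add hh]
    ring_nf
  symm
  calc ∫ τ in 0..(t / h), pker α τ • f (t - τ * h)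
      = h⁻¹ • ∫ σ in Ioi 0, pker α ((t - σ) / h) • f σ := integral_pker_smul_comp_sub_mul hh ht
    _ = h⁻¹ • ∫ σ in Ioi 0, ∑ j ∈ Finset.range (⌊t / h⌋₊ + 1),
          (h ^ (1 - α) * c j) • rlKernel α (t - j * h - σ) • f σ := by
        congr 1
        refine setIntegral_congr_fun measurableSet_Ioi fun σ hσ ↦ ?_
        simp only [pker_sub_div_eq_sum_rlKernel hh (le_of_lt hσ), Finset.sum_smul, mul_smul, c]
    _ = h⁻¹ • ∑ j ∈ Finset.range (⌊t / h⌋₊ + 1),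
          (h ^ (1 - α) * c j) • RLint α f (t - j * h) := by
        rw [integral_finsetSum _ hint]
        congr 1
        refine Finset.sum_congr rfl fun j hj ↦ ?_
        rw [integral_smul, RLint_eq_setIntegral_rlKernel (sub_natCast_mul_mem_Icc hh ht hj).1]
    _ = h ^ (-α) • GLdiff α h (RLint α f) t := by
        simp_rw [GLdiff, hpow, mul_smul, Finset.smul_sum, c, mul_smul]

end GrunwaldLetnikov

theorem stmt5_general {E : Type*} [NormedAddCommGroup E] [NormedSpace ℝ E] [CompleteSpace E]
    {α T : ℝ} (hα : α ∈ Ioo 0 1) {x φ₀ φ : ℝ → E}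
    (hφ₀ : ∀ s ∈ Icc 0 T, RLIntegrableAt α φ₀ s)
    (hx : ∀ t ∈ Icc 0 T, x t = RLint α φ₀ t)
    (hDx : ∀ᵐ t ∂volume.restrict (Icc 0 T), RLderiv α x t = φ t)
    {h : ℝ} (hh : 0 < h) {t : ℝ} (ht : t ∈ Icc 0 T) :
    h ^ (-α) • GLdiff α h x t = ∫ τ in 0..(t / h), pker α τ • φ (t - τ * h) := by
  have hT : 0 ≤ T := ht.1.trans ht.2
  have hφ₀_int : IntervalIntegrable φ₀ volume 0 T :=
    (hφ₀ T (right_mem_Icc.2 hT)).intervalIntegrable hT hα.2.le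
  have hφ₀φ : φ₀ =ᵐ[volume.restrict (Icc 0 T)] φ :=
    (RLderiv_ae_eq_of_eqOn_RLint hα hφ₀_int hx).symm.trans hDx
  have hφ₀φ_sub : ∀ s ∈ Icc 0 T, φ₀ =ᵐ[volume.restrict (Ι 0 s)] φ := fun s hs ↦ by
    rw [uIoc_of_le hs.1]
    exact ae_restrict_of_ae_restrict_of_subset
      (Ioc_subset_Icc_self.trans (Icc_subset_Icc_right hs.2)) hφ₀φ
  have hxφ : EqOn x (RLint α φ) (Icc 0 t) := fun s hs ↦
    have hsT := Icc_subset_Icc_right ht.2 hs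
    (hx s hsT).trans (RLint_congr_ae (hφ₀φ_sub s hsT))
  rw [GLdiff_congr hh ht.1 hxφ]
  exact rpow_neg_smul_GLdiff_RLint hh ht.1 fun s hs ↦
    have hsT := Icc_subset_Icc_right ht.2 hs
    (hφ₀ s hsT).congr_ae (hφ₀φ_sub s hsT)

theorem stmt5 (α T : ℝ) (hα : α ∈ Ioo (0:ℝ) 1) (hT : 0 < T) (n : ℕ)
    (x φ₀ φ : ℝ → Evec n)
    (hφ₀m : Measurable φ₀)
    (C₀ : ℝ) (hφ₀b : ∀ᵐ t ∂volume.restrict (Icc (0:ℝ) T), ‖φ₀ t‖ ≤ C₀)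
    (hx : ∀ t ∈ Icc (0:ℝ) T, x t = RLint α φ₀ t)
    (hφm : Measurable φ)
    (C : ℝ) (hφb : ∀ᵐ t ∂volume.restrict (Icc (0:ℝ) T), ‖φ t‖ ≤ C)
    (hDx : ∀ᵐ t ∂volume.restrict (Icc (0:ℝ) T), RLderiv α x t = φ t) :
    ∀ h : ℝ, 0 < h → ∀ t ∈ Icc (0:ℝ) T,
      ((h ^ (-α) : ℝ)) • GLdiff α h x t =
        ∫ τ in (0:ℝ)..(t / h), pker α τ • φ (t - τ * h) := by
  intro h hh t ht
  exact stmt5_general hα (fun s hs ↦ rlIntegrableAt_of_ae_norm_le hα.1 hs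
    hφ₀m.aestronglyMeasurable hφ₀b) hx hDx hh ht
end
end

section
/- Let f satisfy conditions (f.1)–(f.3) (measurability in t, local Lipschitz continuity in x, and linear growth ‖f(t,x)‖ ≤ (1+‖x‖)c_f). Then there exists L > 0 such that for every x₀ ∈ B(R₀) and every h > 0, the unique solution y(·) of the retarded functional-differential Cauchy problem ẏ(t) = f(t, x₀ + h^{α−1}(Δ_h^{1−α} y)(t)) a.e. on [0,T], y(0) = 0, is Lipschitz continuous with constant L, where one may take L = a E_α(aT^α) with a = max{1+R₀, ‖p_{1−α}‖₁} c_f and E_α the Mittag-Leffler function. -/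
open MeasureTheory Set Real RealInnerProductSpace

noncomputable section

/-!
Put `a = (1 + R₀) c_f`. Summation by parts turns the Grünwald–Letnikov difference of order `1 - α`
into a combination of increments of `y` whose weights `(-1)ᵏ binom(-α, k)` lie in
`[0, (k + 1) ^ (α - 1)]`. Hence, if the increments of `y` are dominated by `∫ g` for some `g ≥ 0`,
then `h ^ (α - 1) * ‖Δ_h^{1-α} y (t)‖ ≤ Γ(α) (I^α g)(t)` uniformly in `h`.
For `g(t) = G exp (l t)` this is at most `G Γ(α) l ^ (-α) exp (l t)`, so for `l` large the equation
improves the bound `G exp (l t)` on `‖ẏ(t)‖` to `(a + G / 2) exp (l t)`. Iterating from the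
Lipschitz constant that `y` has by definition drives `G` to the fixed point `2 a`.
-/

section GrunwaldLetnikovWeights

/-- The coefficient `(-1)ᵏ binom(a, k)` of the Grünwald–Letnikov difference of order `a`. -/
def glWeight (a : ℝ) (k : ℕ) : ℝ := (-1) ^ k * binomR a k

lemma glWeight_zero (a : ℝ) : glWeight a 0 = 1 := by simp [glWeight, binomR]

lemma glWeight_succ (a : ℝ) (k : ℕ) :
    glWeight a (k + 1) = glWeight a k * ((k - a) / (k + 1)) := by
  simp only [glWeight, binomR, Finset.prod_range_succ, Nat.factorial_succ]
  push_cast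
  field_simp
  ring

lemma glWeight_one_sub_succ (a : ℝ) (k : ℕ) :
    glWeight (1 - a) (k + 1) = glWeight (-a) (k + 1) - glWeight (-a) k := by
  induction k with
  | zero => simp [glWeight_succ, glWeight_zero]
  | succ k ih =>
    rw [glWeight_succ, ih, glWeight_succ (-a) (k + 1), glWeight_succ (-a) k]
    push_cast
    field_simp
    ring

lemma glWeight_neg_nonneg {a : ℝ} (ha : 0 ≤ a) (k : ℕ) : 0 ≤ glWeight (-a) k := by
  induction k with
  | zero => simp [glWeight_zero]
  | succ k ih =>
    rw [glWeight_succ, sub_neg_eq_add]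
    positivity

lemma one_sub_mul_le_one_add_rpow_neg {s b : ℝ} (hs : -1 < s) (hb : 0 ≤ b) :
    1 - b * s ≤ (1 + s) ^ (-b) := by
  have hs' : 0 < 1 + s := by linarith
  have hlog : log (1 + s) ≤ s := by linarith [log_le_sub_one_of_pos hs']
  calc 1 - b * s ≤ log (1 + s) * -b + 1 := by nlinarith
    _ ≤ exp (log (1 + s) * -b) := add_one_le_exp _
    _ = (1 + s) ^ (-b) := (rpow_def_of_pos hs' _).symm

lemma glWeight_neg_le_rpow {a : ℝ} (ha₀ : 0 ≤ a) (ha₁ : a ≤ 1) (k : ℕ) :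
    glWeight (-a) k ≤ ((k : ℝ) + 1) ^ (a - 1) := by
  induction k with
  | zero => simp [glWeight_zero]
  | succ k ih =>
    have hratio : ((k : ℝ) - -a) / (k + 1) ≤ (1 + 1 / ((k : ℝ) + 1)) ^ (a - 1) := by
      have hs : -1 < 1 / ((k : ℝ) + 1) := by
        linarith [show 0 < 1 / ((k : ℝ) + 1) by positivity]
      convert one_sub_mul_le_one_add_rpow_neg hs (sub_nonneg.2 ha₁) using 1
      · field_simp
        ring
      · rw [neg_sub]
    calc glWeight (-a) (k + 1) = glWeight (-a) k * ((k - -a) / (k + 1)) := glWeight_succ _ _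
      _ ≤ ((k : ℝ) + 1) ^ (a - 1) * (1 + 1 / ((k : ℝ) + 1)) ^ (a - 1) :=
          mul_le_mul ih hratio (by rw [sub_neg_eq_add]; positivity) (by positivity)
      _ = (((k + 1 : ℕ) : ℝ) + 1) ^ (a - 1) := by
          rw [← mul_rpow (by positivity) (by positivity)]
          push_cast
          congr 1
          field_simp

lemma rpow_mul_glWeight_neg_le_rpow {a h r : ℝ} {k : ℕ} (ha₀ : 0 ≤ a) (ha₁ : a ≤ 1)
    (hr : 0 < r) (hh : 0 ≤ h) (hrh : r ≤ (k + 1) * h) :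
    h ^ (a - 1) * glWeight (-a) k ≤ r ^ (a - 1) :=
  calc h ^ (a - 1) * glWeight (-a) k ≤ h ^ (a - 1) * ((k : ℝ) + 1) ^ (a - 1) := by
        gcongr
        exact glWeight_neg_le_rpow ha₀ ha₁ k
    _ = ((k + 1) * h) ^ (a - 1) := by rw [mul_rpow (by positivity) hh, mul_comm]
    _ ≤ r ^ (a - 1) := rpow_le_rpow_of_nonpos hr hrh (by linarith)

lemma sum_glWeight_one_sub_smul {M : Type*} [AddCommGroup M] [Module ℝ M]
    (a : ℝ) (Y : ℕ → M) (N : ℕ) :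
    ∑ j ∈ Finset.range (N + 1), glWeight (1 - a) j • Y j =
      ∑ k ∈ Finset.range (N + 1), glWeight (-a) k • (Y k - Y (k + 1)) +
        glWeight (-a) N • Y (N + 1) := by
  induction N with
  | zero => simp [glWeight_zero]
  | succ N ih =>
    rw [Finset.sum_range_succ, ih, Finset.sum_range_succ _ (N + 1), glWeight_one_sub_succ]
    module

end GrunwaldLetnikovWeights

section DominatedIncrements

variable {E : Type*} [NormedAddCommGroup E]

/-- Every increment of `y` between points of `s` is bounded in norm by the integral of `g`: an
integrated form of `‖ẏ‖ ≤ g` that does not mention derivatives. -/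
def HasIncrementsLE (y : ℝ → E) (g : ℝ → ℝ) (s : Set ℝ) : Prop :=
  ∀ u ∈ s, ∀ v ∈ s, u ≤ v → ‖y v - y u‖ ≤ ∫ τ in u..v, g τ

lemma HasIncrementsLE.mono {y : ℝ → E} {g₁ g₂ : ℝ → ℝ} {s : Set ℝ} [s.OrdConnected]
    (hy : HasIncrementsLE y g₁ s) (hg₁ : Continuous g₁) (hg₂ : Continuous g₂)
    (hle : ∀ t ∈ s, g₁ t ≤ g₂ t) : HasIncrementsLE y g₂ s := fun u hu v hv huv =>
  (hy u hu v hv huv).trans <|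
    intervalIntegral.integral_mono_on huv (hg₁.intervalIntegrable _ _)
      (hg₂.intervalIntegrable _ _) fun t ht => hle t (Set.Icc_subset s hu hv ht)

lemma hasIncrementsLE_const_iff {y : ℝ → E} {K : NNReal} {s : Set ℝ} :
    HasIncrementsLE y (fun _ => K) s ↔ LipschitzOnWith K y s := by
  simp only [HasIncrementsLE, lipschitzOnWith_iff_norm_sub_le, intervalIntegral.integral_const,
    smul_eq_mul, norm_eq_abs]
  constructor
  · intro hy u hu v hv
    rcases le_total u v with huv | hvu
    · rw [norm_sub_rev, abs_sub_comm, abs_of_nonneg (sub_nonneg.2 huv), mul_comm]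
      exact hy u hu v hv huv
    · rw [abs_of_nonneg (sub_nonneg.2 hvu), mul_comm]
      exact hy v hv u hu hvu
  · intro hy u hu v hv huv
    rw [← abs_of_nonneg (sub_nonneg.2 huv), mul_comm]
    exact hy hv hu

lemma hasIncrementsLE_const_mul_of_tendsto {y : ℝ → E} {g : ℝ → ℝ} {s : Set ℝ} {G : ℕ → ℝ}
    {G' : ℝ} (hG : Filter.Tendsto G Filter.atTop (nhds G'))
    (hy : ∀ k, HasIncrementsLE y (fun τ => G k * g τ) s) :
    HasIncrementsLE y (fun τ => G' * g τ) s := by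
  intro u hu v hv huv
  simp only [HasIncrementsLE, intervalIntegral.integral_const_mul] at hy ⊢
  exact ge_of_tendsto' (hG.mul_const _) fun k => hy k u hu v hv huv

lemma norm_sub_le_integral_of_norm_deriv_le [NormedSpace ℝ E] {y : ℝ → E} {g : ℝ → ℝ} {a b : ℝ}
    {K : NNReal} (hab : a ≤ b) (hy : LipschitzOnWith K y (Icc a b))
    (hg : IntervalIntegrable g volume a b)
    (hderiv : ∀ᵐ t, t ∈ Ioc a b → DifferentiableAt ℝ y t ∧ ‖deriv y t‖ ≤ g t) :
    ‖y b - y a‖ ≤ ∫ t in a..b, g t := by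
  obtain ⟨φ, hφ_norm, hφ⟩ := exists_dual_vector'' ℝ (y b - y a)
  have hac : AbsolutelyContinuousOnInterval (φ ∘ y) a b :=
    (φ.lipschitz.comp_lipschitzOnWith
      (hy.mono (uIcc_of_le hab).subset)).absolutelyContinuousOnInterval
  have hφ_deriv : ∀ᵐ t, t ∈ Ioc a b → ‖deriv (φ ∘ y) t‖ ≤ g t := by
    filter_upwards [hderiv] with t ht htab
    obtain ⟨hdiff, hle⟩ := ht htab
    rw [(φ.hasFDerivAt.comp_hasDerivAt t hdiff.hasDerivAt).deriv]
    exact (φ.le_of_opNorm_le hφ_norm _).trans (by rwa [one_mul])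
  calc ‖y b - y a‖ = ∫ t in a..b, deriv (φ ∘ y) t := by
        rw [hac.integral_deriv_eq_sub, Function.comp_apply, Function.comp_apply, ← map_sub, hφ,
          RCLike.ofReal_real_eq_id, id]
    _ ≤ ‖∫ t in a..b, deriv (φ ∘ y) t‖ := le_norm_self _
    _ ≤ ∫ t in a..b, g t := intervalIntegral.norm_integral_le_of_norm_le hab hφ_deriv hg

lemma hasIncrementsLE_of_norm_deriv_le [NormedSpace ℝ E] {y : ℝ → E} {g : ℝ → ℝ} {s : Set ℝ}
    [s.OrdConnected] {K : NNReal} (hy : LipschitzOnWith K y s) (hg : Continuous g)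
    (hderiv : ∀ᵐ t ∂volume.restrict s, DifferentiableAt ℝ y t ∧ ‖deriv y t‖ ≤ g t) :
    HasIncrementsLE y g s := by
  intro u hu v hv huv
  have hsub : Icc u v ⊆ s := Set.Icc_subset s hu hv
  refine norm_sub_le_integral_of_norm_deriv_le huv (hy.mono hsub) (hg.intervalIntegrable _ _) ?_
  exact (ae_restrict_iff' measurableSet_Ioc).1
    (ae_restrict_of_ae_restrict_of_subset (Ioc_subset_Icc_self.trans hsub) hderiv)

end DominatedIncrements

section RiemannLiouville

lemma intervalIntegrable_sub_rpow_mul {a : ℝ} (ha : 0 < a) {g : ℝ → ℝ} (hg : Continuous g)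
    (t u v : ℝ) : IntervalIntegrable (fun τ => (t - τ) ^ (a - 1) * g τ) volume u v := by
  refine IntervalIntegrable.mul_continuousOn ?_ hg.continuousOn
  simpa using (intervalIntegral.intervalIntegrable_rpow' (a := t - u) (b := t - v)
    (r := a - 1) (by linarith)).comp_sub_left t

lemma Gamma_mul_RLint {a : ℝ} (ha : 0 < a) (g : ℝ → ℝ) (t : ℝ) :
    Real.Gamma a * RLint a g t = ∫ τ in (0 : ℝ)..t, (t - τ) ^ (a - 1) * g τ := by
  simp only [RLint, smul_eq_mul]
  exact mul_inv_cancel_left₀ (Gamma_pos_of_pos ha).ne' _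

lemma RLint_const_mul (a c : ℝ) (g : ℝ → ℝ) (t : ℝ) :
    RLint a (fun τ => c * g τ) t = c * RLint a g t := by
  simp only [RLint, smul_eq_mul, mul_left_comm _ c, intervalIntegral.integral_const_mul]

lemma integral_rpow_mul_exp_neg_mul_le {a l t : ℝ} (ha : 0 < a) (hl : 0 < l) (ht : 0 ≤ t) :
    ∫ τ in (0 : ℝ)..t, τ ^ (a - 1) * exp (-(l * τ)) ≤ l ^ (-a) * Real.Gamma a := by
  have hΓ : 0 < Real.Gamma a := Gamma_pos_of_pos ha
  have hIoi : ∫ τ in Ioi (0 : ℝ), τ ^ (a - 1) * exp (-(l * τ)) = l ^ (-a) * Real.Gamma a := by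
    rw [integral_rpow_mul_exp_neg_mul_Ioi ha hl, one_div, inv_rpow hl.le, rpow_neg hl.le]
  have hint : IntegrableOn (fun τ : ℝ => τ ^ (a - 1) * exp (-(l * τ))) (Ioi 0) :=
    .of_integral_ne_zero (hIoi.trans_ne (mul_pos (rpow_pos_of_pos hl _) hΓ).ne')
  rw [← hIoi, intervalIntegral.integral_of_le ht]
  refine setIntegral_mono_set hint ?_ Ioc_subset_Ioi_self.eventuallyLE
  filter_upwards [ae_restrict_mem measurableSet_Ioi] with τ (hτ : 0 < τ)
  exact mul_nonneg (rpow_nonneg hτ.le _) (exp_pos _).le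

lemma RLint_exp_mul_le {a l t : ℝ} (ha : 0 < a) (hl : 0 < l) (ht : 0 ≤ t) :
    RLint a (fun τ => exp (l * τ)) t ≤ l ^ (-a) * exp (l * t) := by
  refine le_of_mul_le_mul_left ?_ (Gamma_pos_of_pos ha)
  calc Real.Gamma a * RLint a (fun τ => exp (l * τ)) t
      = ∫ τ in (0 : ℝ)..t, (t - τ) ^ (a - 1) * exp (l * (t - (t - τ))) := by
        simp only [Gamma_mul_RLint ha, sub_sub_cancel]
    _ = ∫ τ in (0 : ℝ)..t, τ ^ (a - 1) * exp (l * (t - τ)) := by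
        simpa only [sub_self, sub_zero] using intervalIntegral.integral_comp_sub_left
          (a := 0) (b := t) (fun τ => τ ^ (a - 1) * exp (l * (t - τ))) t
    _ = exp (l * t) * ∫ τ in (0 : ℝ)..t, τ ^ (a - 1) * exp (-(l * τ)) := by
        simp only [mul_sub, sub_eq_add_neg (l * t), exp_add, mul_left_comm _ (exp (l * t)),
          intervalIntegral.integral_const_mul]
    _ ≤ exp (l * t) * (l ^ (-a) * Real.Gamma a) := by
        gcongr
        exact integral_rpow_mul_exp_neg_mul_le ha hl ht
    _ = Real.Gamma a * (l ^ (-a) * exp (l * t)) := by ring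

end RiemannLiouville

section GrunwaldLetnikovDifference

/-- The delayed time `t - k h`, stopped at `0`. Stopping makes the nodes `k = 0, …, ⌊t / h⌋ + 1`
subdivide exactly the interval `[0, t]`. -/
def glNode (h t : ℝ) (k : ℕ) : ℝ := max (t - k * h) 0

variable {h t : ℝ}

lemma glNode_nonneg (h t : ℝ) (k : ℕ) : 0 ≤ glNode h t k := le_max_right _ _

lemma glNode_zero (ht : 0 ≤ t) : glNode h t 0 = t := by simp [glNode, ht]

lemma glNode_succ_le (hh : 0 ≤ h) (k : ℕ) : glNode h t (k + 1) ≤ glNode h t k := by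
  unfold glNode
  gcongr
  simp

lemma glNode_le (hh : 0 ≤ h) (ht : 0 ≤ t) (k : ℕ) : glNode h t k ≤ t :=
  max_le (sub_le_self _ (by positivity)) ht

lemma glNode_of_le_floor (hh : 0 < h) (ht : 0 ≤ t) {k : ℕ} (hk : k ≤ ⌊t / h⌋₊) :
    glNode h t k = t - k * h :=
  max_eq_left <| sub_nonneg.2 <| (le_div_iff₀ hh).1 <| (Nat.le_floor_iff (by positivity)).1 hk

lemma glNode_floor_add_one (hh : 0 < h) : glNode h t (⌊t / h⌋₊ + 1) = 0 := by
  refine max_eq_right (sub_nonpos.2 ?_)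
  rw [← div_le_iff₀ hh]
  exact_mod_cast (Nat.lt_floor_add_one (t / h)).le

variable {E : Type*} [NormedAddCommGroup E] [NormedSpace ℝ E]

lemma GLdiff_one_sub_eq_sum (a : ℝ) {y : ℝ → E} (hy : y 0 = 0) (hh : 0 < h) (ht : 0 ≤ t) :
    GLdiff (1 - a) h y t = ∑ k ∈ Finset.range (⌊t / h⌋₊ + 1),
      glWeight (-a) k • (y (glNode h t k) - y (glNode h t (k + 1))) := by
  have hnodes : GLdiff (1 - a) h y t = ∑ j ∈ Finset.range (⌊t / h⌋₊ + 1),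
      glWeight (1 - a) j • y (glNode h t j) :=
    Finset.sum_congr rfl fun j hj => by
      rw [glNode_of_le_floor hh ht (Finset.mem_range_succ_iff.1 hj), glWeight]
  rw [hnodes, sum_glWeight_one_sub_smul a fun j => y (glNode h t j), glNode_floor_add_one hh, hy,
    smul_zero, add_zero]

lemma norm_rpow_smul_glWeight_smul_le {a : ℝ} (ha₀ : 0 < a) (ha₁ : a ≤ 1) (hh : 0 ≤ h)
    (ht : 0 ≤ t) {y : ℝ → E} {g : ℝ → ℝ} (hg : Continuous g) (hg₀ : ∀ τ ∈ Icc 0 t, 0 ≤ g τ)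
    (hy : HasIncrementsLE y g (Icc 0 t)) (k : ℕ) :
    ‖(h ^ (a - 1)) • glWeight (-a) k • (y (glNode h t k) - y (glNode h t (k + 1)))‖ ≤
      ∫ τ in glNode h t (k + 1)..glNode h t k, (t - τ) ^ (a - 1) * g τ := by
  have hw : 0 ≤ glWeight (-a) k := glWeight_neg_nonneg ha₀.le k
  have hmem (j : ℕ) : glNode h t j ∈ Icc 0 t := ⟨glNode_nonneg h t j, glNode_le hh ht j⟩
  have hstep : glNode h t (k + 1) ≤ glNode h t k := glNode_succ_le hh k
  rw [smul_smul, norm_smul, norm_of_nonneg (by positivity)]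
  calc h ^ (a - 1) * glWeight (-a) k * ‖y (glNode h t k) - y (glNode h t (k + 1))‖
      ≤ h ^ (a - 1) * glWeight (-a) k * ∫ τ in glNode h t (k + 1)..glNode h t k, g τ := by
        gcongr
        exact hy _ (hmem _) _ (hmem _) hstep
    _ = ∫ τ in glNode h t (k + 1)..glNode h t k, h ^ (a - 1) * glWeight (-a) k * g τ :=
        (intervalIntegral.integral_const_mul _ _).symm
    _ ≤ ∫ τ in glNode h t (k + 1)..glNode h t k, (t - τ) ^ (a - 1) * g τ := by
        refine intervalIntegral.integral_mono_on_of_le_Ioo hstep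
          ((hg.const_mul _).intervalIntegrable _ _)
          (intervalIntegrable_sub_rpow_mul ha₀ hg t _ _) fun τ hτ => ?_
        have hτ_lt : τ < t := hτ.2.trans_le (hmem k).2
        have hτ_pos : 0 < τ := (hmem (k + 1)).1.trans_lt hτ.1
        have hτ_gt : t - (k + 1 : ℕ) * h < τ := (le_max_left _ _).trans_lt hτ.1
        push_cast at hτ_gt
        exact mul_le_mul_of_nonneg_right
          (rpow_mul_glWeight_neg_le_rpow ha₀.le ha₁ (by linarith) hh (by linarith))
          (hg₀ τ ⟨hτ_pos.le, hτ_lt.le⟩)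

lemma norm_rpow_smul_GLdiff_le {a : ℝ} (ha₀ : 0 < a) (ha₁ : a ≤ 1) (hh : 0 < h)
    (ht : 0 ≤ t) {y : ℝ → E} {g : ℝ → ℝ} (hg : Continuous g) (hg₀ : ∀ τ ∈ Icc 0 t, 0 ≤ g τ)
    (hy₀ : y 0 = 0) (hy : HasIncrementsLE y g (Icc 0 t)) :
    ‖(h ^ (a - 1)) • GLdiff (1 - a) h y t‖ ≤ Real.Gamma a * RLint a g t := by
  rw [GLdiff_one_sub_eq_sum a hy₀ hh ht, Finset.smul_sum, Gamma_mul_RLint ha₀]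
  set N := ⌊t / h⌋₊ + 1 with hN
  calc ‖∑ k ∈ Finset.range N,
        (h ^ (a - 1)) • glWeight (-a) k • (y (glNode h t k) - y (glNode h t (k + 1)))‖
      ≤ ∑ k ∈ Finset.range N,
          ∫ τ in glNode h t (k + 1)..glNode h t k, (t - τ) ^ (a - 1) * g τ :=
        norm_sum_le_of_le _ fun k _ =>
          norm_rpow_smul_glWeight_smul_le ha₀ ha₁ hh.le ht hg hg₀ hy k
    _ = -∫ τ in glNode h t 0..glNode h t N, (t - τ) ^ (a - 1) * g τ := by
        rw [← intervalIntegral.sum_integral_adjacent_intervals fun k _ =>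
          intervalIntegrable_sub_rpow_mul ha₀ hg t _ _, ← Finset.sum_neg_distrib]
        exact Finset.sum_congr rfl fun k _ => intervalIntegral.integral_symm _ _
    _ = ∫ τ in (0 : ℝ)..t, (t - τ) ^ (a - 1) * g τ := by
        rw [glNode_zero ht, hN, glNode_floor_add_one hh, ← intervalIntegral.integral_symm]

end GrunwaldLetnikovDifference

section FractionalGronwall

/-- An exponential rate `l` at which `c Γ(α) l ^ (-α) = 1 / 2`, so that one use of the equation
halves the dependence on the previous bound. -/
def halvingRate (α c : ℝ) : ℝ := (2 * c * Real.Gamma α) ^ α⁻¹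

lemma halvingRate_pos {α c : ℝ} (hα : 0 < α) (hc : 0 < c) : 0 < halvingRate α c := by
  have := Gamma_pos_of_pos hα
  unfold halvingRate
  positivity

lemma mul_Gamma_mul_halvingRate_rpow {α c : ℝ} (hα : 0 < α) (hc : 0 < c) :
    c * Real.Gamma α * halvingRate α c ^ (-α) = 1 / 2 := by
  have := Gamma_pos_of_pos hα
  rw [halvingRate, rpow_neg (by positivity), rpow_inv_rpow (by positivity) hα.ne']
  field_simp

variable {E : Type*} [NormedAddCommGroup E] [NormedSpace ℝ E] {y : ℝ → E} {α T h A c : ℝ}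
  {K : NNReal}

lemma HasIncrementsLE.halve (hα₀ : 0 < α) (hα₁ : α ≤ 1) (hh : 0 < h) (hA : 0 ≤ A) (hc : 0 < c)
    (hlip : LipschitzOnWith K y (Icc 0 T)) (hy₀ : y 0 = 0)
    (hderiv : ∀ᵐ t ∂volume.restrict (Icc 0 T), DifferentiableAt ℝ y t ∧
      ‖deriv y t‖ ≤ A + c * ‖(h ^ (α - 1)) • GLdiff (1 - α) h y t‖)
    {G : ℝ} (hG : 0 ≤ G)
    (hy : HasIncrementsLE y (fun t => G * exp (halvingRate α c * t)) (Icc 0 T)) :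
    HasIncrementsLE y (fun t => (A + G / 2) * exp (halvingRate α c * t)) (Icc 0 T) := by
  set l := halvingRate α c
  have hl₀ : 0 < l := halvingRate_pos hα₀ hc
  have := Gamma_pos_of_pos hα₀
  refine hasIncrementsLE_of_norm_deriv_le hlip (by fun_prop) ?_
  filter_upwards [hderiv, ae_restrict_mem measurableSet_Icc] with t ⟨hdiff, hle⟩ ⟨ht₀, htT⟩
  have hyt : HasIncrementsLE y (fun τ => G * exp (l * τ)) (Icc 0 t) := fun u hu v hv =>
    hy u (Icc_subset_Icc_right htT hu) v (Icc_subset_Icc_right htT hv)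
  refine ⟨hdiff, hle.trans ?_⟩
  calc A + c * ‖(h ^ (α - 1)) • GLdiff (1 - α) h y t‖
      ≤ A + c * (Real.Gamma α * RLint α (fun τ => G * exp (l * τ)) t) := by
        gcongr
        exact norm_rpow_smul_GLdiff_le hα₀ hα₁ hh ht₀ (by fun_prop) (fun _ _ => by positivity)
          hy₀ hyt
    _ ≤ A + c * (Real.Gamma α * (G * (l ^ (-α) * exp (l * t)))) := by
        rw [RLint_const_mul]
        gcongr
        exact RLint_exp_mul_le hα₀ hl₀ ht₀
    _ = A + c * Real.Gamma α * l ^ (-α) * G * exp (l * t) := by ring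
    _ = A + G / 2 * exp (l * t) := by
        rw [mul_Gamma_mul_halvingRate_rpow hα₀ hc]
        ring
    _ ≤ A * exp (l * t) + G / 2 * exp (l * t) := by
        gcongr
        exact le_mul_of_one_le_right hA (one_le_exp (by positivity))
    _ = (A + G / 2) * exp (l * t) := by ring

lemma hasIncrementsLE_two_mul_exp (hα₀ : 0 < α) (hα₁ : α ≤ 1) (hh : 0 < h) (hA : 0 ≤ A)
    (hc : 0 < c) (hlip : LipschitzOnWith K y (Icc 0 T)) (hy₀ : y 0 = 0)
    (hderiv : ∀ᵐ t ∂volume.restrict (Icc 0 T), DifferentiableAt ℝ y t ∧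
      ‖deriv y t‖ ≤ A + c * ‖(h ^ (α - 1)) • GLdiff (1 - α) h y t‖) :
    HasIncrementsLE y (fun t => 2 * A * exp (halvingRate α c * t)) (Icc 0 T) := by
  have hl₀ := halvingRate_pos hα₀ hc
  have hiter (k : ℕ) : HasIncrementsLE y
      (fun t => (2 * A + K * (1 / 2) ^ k) * exp (halvingRate α c * t)) (Icc 0 T) := by
    induction k with
    | zero =>
      refine (hasIncrementsLE_const_iff.2 hlip).mono (by fun_prop) (by fun_prop) fun t ht => ?_
      have hexp : 1 ≤ exp (halvingRate α c * t) := one_le_exp (mul_nonneg hl₀.le ht.1)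
      calc (K : ℝ) ≤ 2 * A + K * (1 / 2) ^ 0 := by simpa using hA
        _ ≤ _ := le_mul_of_one_le_right (by positivity) hexp
    | succ k ih =>
      convert ih.halve hα₀ hα₁ hh hA hc hlip hy₀ hderiv (by positivity) using 3
      ring
  refine hasIncrementsLE_const_mul_of_tendsto ?_ hiter
  simpa using ((tendsto_pow_atTop_nhds_zero_of_lt_one (r := (1 / 2 : ℝ)) (by norm_num)
    (by norm_num)).const_mul (K : ℝ)).const_add (2 * A)

theorem lipschitzOnWith_of_norm_deriv_le_GLdiff (hα₀ : 0 < α) (hα₁ : α ≤ 1) (hh : 0 < h)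
    (hA : 0 ≤ A) (hc : 0 < c) (hlip : LipschitzOnWith K y (Icc 0 T)) (hy₀ : y 0 = 0)
    (hderiv : ∀ᵐ t ∂volume.restrict (Icc 0 T), DifferentiableAt ℝ y t ∧
      ‖deriv y t‖ ≤ A + c * ‖(h ^ (α - 1)) • GLdiff (1 - α) h y t‖) :
    LipschitzOnWith (2 * A * exp (halvingRate α c * T)).toNNReal y (Icc 0 T) := by
  have hl₀ := halvingRate_pos hα₀ hc
  rw [← hasIncrementsLE_const_iff, coe_toNNReal _ (by positivity)]
  refine (hasIncrementsLE_two_mul_exp hα₀ hα₁ hh hA hc hlip hy₀ hderiv).mono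
    (by fun_prop) (by fun_prop) fun t ht => ?_
  gcongr
  exact ht.2

end FractionalGronwall

theorem stmt11_general {E : Type*} [NormedAddCommGroup E] [NormedSpace ℝ E] {α T R₀ cf h : ℝ}
    (hα₀ : 0 < α) (hα₁ : α ≤ 1) (hcf : 0 < cf) (hh : 0 < h) {f : ℝ → E → E}
    (hf : ∀ t ∈ Icc 0 T, ∀ x, ‖f t x‖ ≤ (1 + ‖x‖) * cf) {x₀ : E} (hx₀ : ‖x₀‖ ≤ R₀) {y : ℝ → E}
    {K : NNReal} (hlip : LipschitzOnWith K y (Icc 0 T)) (hy₀ : y 0 = 0)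
    (hode : ∀ᵐ t ∂volume.restrict (Icc 0 T),
      HasDerivAt y (f t (x₀ + (h ^ (α - 1)) • GLdiff (1 - α) h y t)) t) :
    LipschitzOnWith (2 * ((1 + R₀) * cf) * exp (halvingRate α cf * T)).toNNReal y (Icc 0 T) := by
  have hR₀ : 0 ≤ R₀ := (norm_nonneg x₀).trans hx₀
  refine lipschitzOnWith_of_norm_deriv_le_GLdiff hα₀ hα₁ hh (by positivity) hcf hlip hy₀ ?_
  filter_upwards [hode, ae_restrict_mem measurableSet_Icc] with t ht htT
  refine ⟨ht.differentiableAt, ?_⟩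
  set z := (h ^ (α - 1)) • GLdiff (1 - α) h y t
  calc ‖deriv y t‖ ≤ (1 + ‖x₀ + z‖) * cf := ht.deriv ▸ hf t htT _
    _ ≤ (1 + (R₀ + ‖z‖)) * cf := by
        gcongr
        exact norm_add_le_of_le hx₀ le_rfl
    _ = (1 + R₀) * cf + cf * ‖z‖ := by ring

theorem stmt11 (α T R₀ : ℝ) (hα : α ∈ Ioo (0:ℝ) 1) (hT : 0 < T) (hR₀ : 0 < R₀) (n : ℕ)
    (f : ℝ → Evec n → Evec n)
    (hf1 : ∀ x : Evec n, Measurable fun t => f t x)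
    (hf2 : ∀ r > (0:ℝ), ∃ lam > (0:ℝ), ∀ t ∈ Icc (0:ℝ) T, ∀ x y : Evec n,
      ‖x‖ ≤ r → ‖y‖ ≤ r → ‖f t x - f t y‖ ≤ lam * ‖x - y‖)
    (cf : ℝ) (hcf : 0 < cf)
    (hf3 : ∀ t ∈ Icc (0:ℝ) T, ∀ x : Evec n, ‖f t x‖ ≤ (1 + ‖x‖) * cf) :
    ∃ L : ℝ, 0 < L ∧ ∀ (x₀ : Evec n) (h : ℝ) (y : ℝ → Evec n), ‖x₀‖ ≤ R₀ → 0 < h →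
      IsApproxSol α T h f x₀ y → LipschitzOnWith L.toNNReal y (Icc (0:ℝ) T) := by
  exact ⟨2 * ((1 + R₀) * cf) * exp (halvingRate α cf * T), by positivity,
    fun x₀ h y hx₀ hh ⟨⟨_, hlip⟩, hy₀, hode⟩ =>
      stmt11_general hα.1 hα.2.le hcf hh hf3 hx₀ hlip hy₀ hode⟩
end
end
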